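/- arXiv:1901.01351 — 2 statements merged into one kernel-verified Lean document; each statement's English description precedes it below -/
import Mathlib

section
/- Let p be a prime number, let k be a field of characteristic p, and let t ∈ k be transcendental over the prime subfield 𝔽_p of k. Then the subgroup G_t := ⟨ tⁿ | n ∈ ℤ ⟩ of the additive group (k, +) generated by all integer powers of t is not finitely generated. -/
/-!
The powers `1, t, t², …` of a transcendental element form an infinite linearly independent family.
A finite set generating an additive submonoid of a module spans a submodule containing it, and the
span of a finite set contains no infinite linearly independent family.
-/

open Polynomial

theorem finite_of_linearIndependent_mem_fg_addSubmonoid {R M ι : Type*} [Semiring R]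
    [StrongRankCondition R] [AddCommMonoid M] [Module R M] {v : ι → M}
    (hv : LinearIndependent R v) {H : AddSubmonoid M} (hH : H.FG) (hmem : ∀ i, v i ∈ H) :
    Finite ι := by
  obtain ⟨S, rfl⟩ := hH
  exact hv.finite_of_le_span_finite v S <|
    Set.range_subset_iff.mpr fun i ↦ Submodule.closure_subset_span (hmem i)

theorem linearIndependent_pow_of_transcendental {R A : Type*} [CommRing R] [Ring A] [Algebra R A]
    {t : A} (ht : Transcendental R t) : LinearIndependent R fun n : ℕ ↦ t ^ n := by
  have haeval : LinearMap.ker (aeval t : R[X] →ₐ[R] A).toLinearMap = ⊥ :=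
    LinearMap.ker_eq_bot.mpr (transcendental_iff_injective.mp ht)
  simpa [Function.comp_def] using (basisMonomials R).linearIndependent.map' _ haeval

theorem stmt_1_general {R K : Type*} [CommRing R] [DivisionRing K] [Algebra R K] {t : K}
    (ht : Transcendental R t) : ¬ (AddSubgroup.closure {x : K | ∃ n : ℤ, x = t ^ n}).FG := by
  intro hfg
  have : Nontrivial R := (algebraMap R K).domain_nontrivial
  have hmem (n : ℕ) : t ^ n ∈ AddSubgroup.closure {x : K | ∃ n : ℤ, x = t ^ n} :=
    AddSubgroup.subset_closure ⟨n, (zpow_natCast t n).symm⟩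
  have : Finite ℕ := finite_of_linearIndependent_mem_fg_addSubmonoid
    (linearIndependent_pow_of_transcendental ht)
    ((AddSubgroup.fg_iff_addSubmonoid_fg _).mp hfg) hmem
  exact not_finite ℕ

/-- Let `p` be a prime, `k` a field of characteristic `p`, and `t ∈ k`
transcendental over the prime subfield `𝔽_p`. Then the additive subgroup
`G_t = ⟨tⁿ | n ∈ ℤ⟩` of `(k, +)` is not finitely generated. -/
theorem stmt_1 (p : ℕ) [Fact p.Prime] {k : Type*} [Field k] [CharP k p]
    (t : k)
    (ht : letI : Algebra (ZMod p) k := ZMod.algebra k p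
          Transcendental (ZMod p) t) :
    ¬ (AddSubgroup.closure {x : k | ∃ n : ℤ, x = t ^ n}).FG := by
  let : Algebra (ZMod p) k := ZMod.algebra k p
  exact stmt_1_general ht
end

section
/- Let p be a prime number, let k be a field of characteristic p, and let t ∈ k be transcendental over the prime subfield 𝔽_p. Let μ : k → k be the bijection x ↦ t·x and τ : k → k the bijection x ↦ x + 1. Then for every n ∈ ℤ the composite μⁿ ∘ τ ∘ μ⁻ⁿ equals the translation x ↦ x + tⁿ, and the subgroup of the group of bijections of k generated by the set { μⁿ ∘ τ ∘ μ⁻ⁿ : n ∈ ℤ } is not finitely generated. -/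
/-!
Conjugating the translation by `1` by the `n`-th power of multiplication by `t` gives the
translation by `tⁿ`. Translations form a copy of the additive group, so these conjugates generate a
copy of the additive group of the ring `ℤ[t, t⁻¹]`. If it were finitely generated, `t` would lie in
a ring that is finite over `ℤ` and hence be integral over `ℤ`; in characteristic `p` this would make
`t` algebraic over `𝔽_p`.
-/

theorem toPerm_conj_addLeft {G A : Type*} [Group G] [AddGroup A] [DistribMulAction G A]
    (g : G) (a : A) :
    MulAction.toPerm g * Equiv.addLeft a * (MulAction.toPerm g)⁻¹ = Equiv.addLeft (g • a) := by
  ext x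
  change g • (a + g⁻¹ • x) = g • a + x
  rw [smul_add, smul_inv_smul]

theorem zpow_conj_addLeft_one {R : Type*} [Ring R] {u : Rˣ} {μ : Equiv.Perm R}
    (hμ : ∀ x, μ x = u * x) (n : ℤ) :
    μ ^ n * Equiv.addLeft 1 * μ ^ (-n) = Equiv.addLeft ((u ^ n : Rˣ) : R) := by
  obtain rfl : μ = MulAction.toPermHom Rˣ R u := Equiv.ext hμ
  rw [zpow_neg, ← map_zpow, MulAction.toPermHom_apply, toPerm_conj_addLeft, Units.smul_def,
    smul_eq_mul, mul_one]

theorem subgroup_fg_map_iff_of_injective {G H : Type*} [Group G] [Group H] {f : G →* H}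
    (hf : Function.Injective f) {K : Subgroup G} : (K.map f).FG ↔ K.FG := by
  simp only [Subgroup.fg_iff_submonoid_fg]
  exact ⟨Submonoid.FG.map_injective f hf, fun hK ↦ hK.map f⟩

theorem fg_closure_image_addLeft_iff {A : Type*} [AddGroup A] {s : Set A} :
    (Subgroup.closure (Equiv.addLeft '' s)).FG ↔ (AddSubgroup.closure s).FG := by
  let translation : Multiplicative A →* Equiv.Perm A := MulAction.toPermHom (Multiplicative A) A
  have translation_injective : Function.Injective translation :=
    AddAction.toPerm_injective (α := A) (β := A)
  have map_translation : (AddSubgroup.closure s).toSubgroup.map translation =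
      Subgroup.closure (Equiv.addLeft '' s) := by
    rw [AddSubgroup.toSubgroup_closure, MonoidHom.map_closure]
    rfl
  rw [← map_translation, subgroup_fg_map_iff_of_injective translation_injective,
    AddSubgroup.fg_iff_mul_fg]

theorem isIntegral_of_mem_of_fg_span {R A : Type*} [CommRing R] [Ring A] [Algebra R A]
    {M : Submonoid A} (hM : (Submodule.span R (M : Set A)).FG) {x : A} (hx : x ∈ M) :
    IsIntegral R x := by
  refine IsIntegral.of_mem_of_fg (Algebra.adjoin R M) ?_ x (Algebra.subset_adjoin hx)
  rwa [Algebra.adjoin_eq_span, Submonoid.closure_eq]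

theorem isIntegral_of_fg_closure_range_zpow {R : Type*} [Ring R] {u : Rˣ}
    (hu : (AddSubgroup.closure (Set.range fun n : ℤ ↦ ((u ^ n : Rˣ) : R))).FG) :
    IsIntegral ℤ (u : R) := by
  let powers : Submonoid R := (Subgroup.zpowers u).toSubmonoid.map (Units.coeHom R)
  have coe_powers : (powers : Set R) = Set.range fun n : ℤ ↦ ((u ^ n : Rˣ) : R) :=
    (Set.range_comp _ _).symm
  refine isIntegral_of_mem_of_fg_span (M := powers) ?_ ⟨u, Subgroup.mem_zpowers u, rfl⟩
  rwa [Submodule.fg_iff_addSubgroup_fg, Submodule.span_int_eq_addSubgroupClosure, coe_powers]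

theorem stmt_4_general {R : Type*} [Ring R] {u : Rˣ} (hu : ¬ IsIntegral ℤ (u : R))
    (μ τ : Equiv.Perm R) (hμ : ∀ x, μ x = u * x) (hτ : ∀ x, τ x = x + 1) :
    (∀ n : ℤ, ∀ x : R, (μ ^ n * τ * μ ^ (-n)) x = x + (u ^ n : Rˣ)) ∧
      ¬ (Subgroup.closure {g : Equiv.Perm R | ∃ n : ℤ, g = μ ^ n * τ * μ ^ (-n)}).FG := by
  obtain rfl : τ = Equiv.addLeft 1 := Equiv.ext fun x ↦ (hτ x).trans (add_comm x 1)
  simp only [zpow_conj_addLeft_one hμ]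
  have conjugates_eq : {g | ∃ n : ℤ, g = Equiv.addLeft ((u ^ n : Rˣ) : R)} =
      Equiv.addLeft '' Set.range fun n : ℤ ↦ ((u ^ n : Rˣ) : R) := by
    ext g
    simp [eq_comm]
  rw [conjugates_eq, fg_closure_image_addLeft_iff]
  exact ⟨fun n x ↦ add_comm _ x, fun hfg ↦ hu (isIntegral_of_fg_closure_range_zpow hfg)⟩

/-- Let `p` be a prime, `k` a field of characteristic `p`, and `t ∈ k`
transcendental over the prime subfield `𝔽_p`. Let `μ : k → k` be the bijection
`x ↦ t·x` and `τ : k → k` the bijection `x ↦ x + 1`. Then for every `n : ℤ`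
the composite `μⁿ ∘ τ ∘ μ⁻ⁿ` is the translation `x ↦ x + tⁿ`, and the subgroup
of the permutation group of `k` generated by `{ μⁿ ∘ τ ∘ μ⁻ⁿ : n ∈ ℤ }` is not
finitely generated. -/
theorem stmt_4 (p : ℕ) [Fact p.Prime] {k : Type*} [Field k] [CharP k p]
    (t : k)
    (ht : letI : Algebra (ZMod p) k := ZMod.algebra k p
          Transcendental (ZMod p) t)
    (μ τ : Equiv.Perm k) (hμ : ∀ x, μ x = t * x) (hτ : ∀ x, τ x = x + 1) :
    (∀ n : ℤ, ∀ x : k, (μ ^ n * τ * μ ^ (-n)) x = x + t ^ n) ∧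
      ¬ (Subgroup.closure {g : Equiv.Perm k | ∃ n : ℤ, g = μ ^ n * τ * μ ^ (-n)}).FG := by
  let _ : Algebra (ZMod p) k := ZMod.algebra k p
  have ht0 : t ≠ 0 := fun h ↦ ht (h ▸ isAlgebraic_zero)
  have not_integral : ¬ IsIntegral ℤ t := fun h ↦ ht h.tower_top.isAlgebraic
  simpa using stmt_4_general (u := Units.mk0 t ht0) not_integral μ τ hμ hτ
end
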